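/- Let δ > 0, λ ≥ 0, and let μ_MP be the Marchenko–Pastur distribution with parameter δ. Define K₀(t) = ∫ e^{−(x+λ)t} dμ_MP(x) and K₁(t) = ∫ x e^{−(x+λ)t} dμ_MP(x) for t ≥ 0. Then the pair (R_θ, R_ℓ) := (K₀, −(1/δ) K₁) solves the coupled Volterra integral equations of the DMFT response functions for ridge regression: for all t ≥ 0, R_θ(t) = 1 − ∫₀ᵗ ( (1 + λ) R_θ(s) + ∫₀ˢ R_ℓ(s − u) R_θ(u) du ) ds, and R_ℓ(t) = −(1/δ) R_θ(t) − (1/δ) ∫₀ᵗ R_θ(t − s) R_ℓ(s) ds. -/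

import Mathlib

open MeasureTheory

/-- Lower edge `λ₋ = (1 − 1/√δ)²` of the Marchenko–Pastur bulk. -/
noncomputable def lamMinus (δ : ℝ) : ℝ := (1 - 1 / Real.sqrt δ) ^ 2

/-- Upper edge `λ₊ = (1 + 1/√δ)²` of the Marchenko–Pastur bulk. -/
noncomputable def lamPlus (δ : ℝ) : ℝ := (1 + 1 / Real.sqrt δ) ^ 2

/-- Density `δ √((λ₊ − x)(x − λ₋)) / (2π x)` of the bulk of the Marchenko–Pastur law. -/
noncomputable def mpDensity (δ : ℝ) (x : ℝ) : ℝ :=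
  δ * Real.sqrt ((lamPlus δ - x) * (x - lamMinus δ)) / (2 * Real.pi * x)

/-- The Marchenko–Pastur distribution with parameter `δ`: the absolutely continuous part
with density `mpDensity δ` supported on `[λ₋, λ₊]`, plus an atom of mass `1 − δ` at `0`
(present exactly when `δ < 1`, since `ENNReal.ofReal (1 − δ) = 0` for `δ ≥ 1`). -/
noncomputable def mpMeasure (δ : ℝ) : Measure ℝ :=
  volume.withDensity
      (fun x => ENNReal.ofReal ((Set.Icc (lamMinus δ) (lamPlus δ)).indicator (mpDensity δ) x))
    + ENNReal.ofReal (1 - δ) • Measure.dirac 0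

/-- `K₀(t) = ∫ e^{−(x+λ)t} dμ_MP(x)`. -/
noncomputable def K0 (δ lam t : ℝ) : ℝ := ∫ x, Real.exp (-(x + lam) * t) ∂(mpMeasure δ)

/-- `K₁(t) = ∫ x e^{−(x+λ)t} dμ_MP(x)`. -/
noncomputable def K1 (δ lam t : ℝ) : ℝ := ∫ x, x * Real.exp (-(x + lam) * t) ∂(mpMeasure δ)

open Real Set Filter Topology in
/-- Differentiation under the integral sign over a compact interval. -/
theorem hasDerivAt_intervalIntegral_of_continuous {a b : ℝ} {F F' : ℝ → ℝ → ℝ}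
    (hF : Continuous (Function.uncurry F)) (hF' : Continuous (Function.uncurry F'))
    (h : ∀ t x, HasDerivAt (fun t => F t x) (F' t x) t) (t : ℝ) :
    HasDerivAt (fun t => ∫ x in a..b, F t x) (∫ x in a..b, F' t x) t := by
  obtain ⟨C, hC⟩ := ((isCompact_Icc (a := t - 1) (b := t + 1)).prod
    (isCompact_uIcc (a := a) (b := b))).exists_bound_of_continuousOn hF'.continuousOn
  refine (intervalIntegral.hasDerivAt_integral_of_dominated_loc_of_deriv_le
    (bound := fun _ => C) (Icc_mem_nhds (sub_one_lt t) (lt_add_one t))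
    (Eventually.of_forall fun x => ?_) ?_ ?_ ?_ intervalIntegrable_const ?_).2
  · exact (hF.comp (Continuous.prodMk_right x)).aestronglyMeasurable
  · exact (hF.comp (Continuous.prodMk_right t)).intervalIntegrable _ _
  · exact (hF'.comp (Continuous.prodMk_right t)).aestronglyMeasurable
  · exact Eventually.of_forall fun x hx s hs => hC (s, x) ⟨hs, uIoc_subset_uIcc hx⟩
  · exact Eventually.of_forall fun x _ s _ => h s x

/-- Leibniz rule for the convolution of two continuously differentiable functions. -/
theorem hasDerivAt_convolution_interval {f f' g g' : ℝ → ℝ}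
    (hf : ∀ t, HasDerivAt f (f' t) t) (hg : ∀ t, HasDerivAt g (g' t) t)
    (cf' : Continuous f') (cg' : Continuous g') (t : ℝ) :
    HasDerivAt (fun t => ∫ u in (0:ℝ)..t, f (t - u) * g u)
      (f 0 * g t + ∫ u in (0:ℝ)..t, f' (t - u) * g u) t := by
  have cf : Continuous f := continuous_iff_continuousAt.2 fun t => (hf t).continuousAt
  have cg : Continuous g := continuous_iff_continuousAt.2 fun t => (hg t).continuousAt
  have scale : ∀ (k : ℝ → ℝ) (t : ℝ), ∫ u in (0:ℝ)..t, k (t - u) * g u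
      = ∫ v in (0:ℝ)..1, t * (k (t - v * t) * g (v * t)) := fun k t => by
    rw [intervalIntegral.integral_const_mul,
      intervalIntegral.mul_integral_comp_mul_right (f := fun u => k (t - u) * g u) t]
    simp
  have hfv : ∀ t v : ℝ, HasDerivAt (fun t => f (t - v * t)) (f' (t - v * t) * (1 - v)) t :=
    fun t v => (hf _).comp t
      (((hasDerivAt_id t).sub ((hasDerivAt_id t).const_mul v)).congr_deriv (by simp))
  have hgv : ∀ t v : ℝ, HasDerivAt (fun t => g (v * t)) (g' (v * t) * v) t :=
    fun t v => (hg _).comp t (by simpa using (hasDerivAt_id t).const_mul v)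
  have main := hasDerivAt_intervalIntegral_of_continuous (a := 0) (b := 1)
    (F := fun t v => t * (f (t - v * t) * g (v * t)))
    (F' := fun t v => 1 * (f (t - v * t) * g (v * t)) + t * (f' (t - v * t) * (1 - v) * g (v * t)
      + f (t - v * t) * (g' (v * t) * v)))
    (by fun_prop) (by fun_prop)
    (fun t v => (hasDerivAt_id t).mul ((hfv t v).mul (hgv t v))) t
  have bd : ∫ v in (0:ℝ)..1, (1 * (f (t - v * t) * g (v * t)) +
      v * (-(f' (t - v * t) * t) * g (v * t) + f (t - v * t) * (g' (v * t) * t)))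
      = f 0 * g t := by
    rw [intervalIntegral.integral_eq_sub_of_hasDerivAt
      (f := fun v => v * (f (t - v * t) * g (v * t)))]
    · simp
    · intro v _
      have h1 : HasDerivAt (fun v => f (t - v * t)) (-(f' (t - v * t) * t)) v := by
        exact ((hf (t - v * t)).comp v (((hasDerivAt_id v).mul_const t).const_sub t)).congr_deriv
          (by simp)
      have h2 : HasDerivAt (fun v => g (v * t)) (g' (v * t) * t) v := by
        exact ((hg (v * t)).comp v ((hasDerivAt_id v).mul_const t)).congr_deriv (by simp)
      exact (hasDerivAt_id v).mul (h1.mul h2)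
    · apply Continuous.intervalIntegrable; fun_prop
  have e : (fun t => ∫ u in (0:ℝ)..t, f (t - u) * g u)
      = fun t => ∫ v in (0:ℝ)..1, t * (f (t - v * t) * g (v * t)) := funext (scale f)
  rw [e, scale f' t, ← bd, ← intervalIntegral.integral_add
    (by apply Continuous.intervalIntegrable; fun_prop)
    (by apply Continuous.intervalIntegrable; fun_prop)]
  convert main using 1
  congr 1
  ext v
  ring

/-- The functions `φₙ(t) = (2/π) ∫₀^π sin θ sin (nθ) e^{-(c + 2 r cos θ) t} dθ`, which are
exponentially weighted modified Bessel functions. -/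
noncomputable def besselWeight (c r : ℝ) (n : ℕ) (t : ℝ) : ℝ :=
  2 / Real.pi * ∫ θ in (0:ℝ)..Real.pi,
    Real.sin θ * Real.sin (n * θ) * Real.exp (-(c + 2 * r * Real.cos θ) * t)

theorem integral_sin_mul_sin_one :
    ∫ θ in (0:ℝ)..Real.pi, Real.sin θ * Real.sin ((1 : ℕ) * θ) = Real.pi / 2 := by
  have : ∀ θ : ℝ, Real.sin θ * Real.sin ((1 : ℕ) * θ) = Real.sin θ ^ 2 := fun θ => by
    push_cast; ring_nf
  simp only [this, integral_sin_sq]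
  simp

theorem integral_sin_mul_sin_add_two (n : ℕ) :
    ∫ θ in (0:ℝ)..Real.pi, Real.sin θ * Real.sin ((n + 2 : ℕ) * θ) = 0 := by
  have h1 : (n + 1 : ℝ) ≠ 0 := by positivity
  have h3 : (n + 3 : ℝ) ≠ 0 := by positivity
  rw [intervalIntegral.integral_eq_sub_of_hasDerivAt (f := fun θ =>
    (Real.sin ((n + 1 : ℝ) * θ) / (n + 1) - Real.sin ((n + 3 : ℝ) * θ) / (n + 3)) / 2)]
  · have e1 := Real.sin_nat_mul_pi (n + 1)
    have e3 := Real.sin_nat_mul_pi (n + 3)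
    push_cast at e1 e3
    simp [e1, e3]
  · intro θ _
    have d : ∀ k : ℝ, k ≠ 0 →
        HasDerivAt (fun θ => Real.sin (k * θ) / k) (Real.cos (k * θ)) θ := fun k hk => by
      have := (((hasDerivAt_id θ).const_mul k).sin).div_const k
      simpa [hk] using this
    refine (((d _ h1).sub (d _ h3)).div_const 2).congr_deriv ?_
    rw [show (n + 1 : ℝ) * θ = (n + 2 : ℕ) * θ - θ by push_cast; ring,
      show (n + 3 : ℝ) * θ = (n + 2 : ℕ) * θ + θ by push_cast; ring,
      Real.cos_sub, Real.cos_add]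
    ring
  · apply Continuous.intervalIntegrable; fun_prop

namespace besselWeight

variable (c r : ℝ)

theorem apply_index_zero (t : ℝ) : besselWeight c r 0 t = 0 := by simp [besselWeight]

theorem one_apply_zero : besselWeight c r 1 0 = 1 := by
  have := integral_sin_mul_sin_one
  simp only [besselWeight, mul_zero, Real.exp_zero, mul_one, this]
  field_simp

theorem add_two_apply_zero (n : ℕ) : besselWeight c r (n + 2) 0 = 0 := by
  simp only [besselWeight, mul_zero, Real.exp_zero, mul_one, integral_sin_mul_sin_add_two n]

theorem sin_add_sin_add_two (n : ℕ) (θ : ℝ) :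
    Real.sin (n * θ) + Real.sin ((n + 2 : ℕ) * θ)
      = 2 * Real.cos θ * Real.sin ((n + 1 : ℕ) * θ) := by
  rw [show (n : ℝ) * θ = (n + 1 : ℕ) * θ - θ by push_cast; ring,
    show ((n + 2 : ℕ) : ℝ) * θ = (n + 1 : ℕ) * θ + θ by push_cast; ring,
    Real.sin_sub, Real.sin_add]
  ring

theorem hasDerivAt (n : ℕ) (t : ℝ) :
    HasDerivAt (besselWeight c r (n + 1)) (-c * besselWeight c r (n + 1) t
      - r * (besselWeight c r n t + besselWeight c r (n + 2) t)) t := by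
  have main := (hasDerivAt_intervalIntegral_of_continuous (a := 0) (b := Real.pi)
    (F := fun t θ => Real.sin θ * Real.sin ((n + 1 : ℕ) * θ)
      * Real.exp (-(c + 2 * r * Real.cos θ) * t))
    (F' := fun t θ => Real.sin θ * Real.sin ((n + 1 : ℕ) * θ)
      * (Real.exp (-(c + 2 * r * Real.cos θ) * t) * -(c + 2 * r * Real.cos θ)))
    (by fun_prop) (by fun_prop) (fun t θ => by
      simpa using (((hasDerivAt_id t).const_mul (-(c + 2 * r * Real.cos θ))).exp).const_mul
        (Real.sin θ * Real.sin ((n + 1 : ℕ) * θ))) t).const_mul (2 / Real.pi)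
  refine main.congr_deriv ?_
  simp only [besselWeight]
  have ii : ∀ (k : ℕ), IntervalIntegrable (fun θ => Real.sin θ * Real.sin (k * θ)
      * Real.exp (-(c + 2 * r * Real.cos θ) * t)) MeasureTheory.volume 0 Real.pi := fun k => by
    apply Continuous.intervalIntegrable; fun_prop
  symm
  rw [← mul_add, ← intervalIntegral.integral_add (ii n) (ii (n + 2)), mul_left_comm (-c),
    mul_left_comm r, ← mul_sub, ← intervalIntegral.integral_const_mul,
    ← intervalIntegral.integral_const_mul, ← intervalIntegral.integral_sub
      ((ii _).const_mul _) (((ii _).add (ii _)).const_mul _)]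
  congr 2
  ext θ
  linear_combination (-r * Real.sin θ * Real.exp (-(c + 2 * r * Real.cos θ) * t))
    * sin_add_sin_add_two n θ

theorem continuous (n : ℕ) : Continuous (besselWeight c r n) := by
  unfold besselWeight
  refine continuous_const.mul ?_
  apply intervalIntegral.continuous_parametric_intervalIntegral_of_continuous'
  fun_prop

theorem exists_mul_abs_le (T : ℝ) :
    ∃ B, ∀ (n : ℕ) (t : ℝ), |t| ≤ T → n * |besselWeight c r n t| ≤ B := by
  have cont : Continuous fun p : ℝ × ℝ => Real.cos p.2
      * Real.exp (-(c + 2 * r * Real.cos p.2) * p.1) + Real.sin p.2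
      * (Real.exp (-(c + 2 * r * Real.cos p.2) * p.1) * (2 * r * Real.sin p.2 * p.1)) := by
    fun_prop
  obtain ⟨C, hC⟩ := ((isCompact_Icc (a := -T) (b := T)).prod
    (isCompact_uIcc (a := 0) (b := Real.pi))).exists_bound_of_continuousOn cont.continuousOn
  refine ⟨2 / Real.pi * (C * |Real.pi - 0|), fun n t ht => ?_⟩
  have parts := intervalIntegral.integral_mul_deriv_eq_deriv_mul (a := 0) (b := Real.pi)
    (u := fun θ => Real.sin θ * Real.exp (-(c + 2 * r * Real.cos θ) * t))
    (u' := fun θ => Real.cos θ * Real.exp (-(c + 2 * r * Real.cos θ) * t) + Real.sin θ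
      * (Real.exp (-(c + 2 * r * Real.cos θ) * t) * (2 * r * Real.sin θ * t)))
    (v := fun θ => -Real.cos (n * θ)) (v' := fun θ => n * Real.sin (n * θ))
    (fun θ _ => by
      have := (((((Real.hasDerivAt_cos θ).const_mul (2 * r)).const_add c).neg).mul_const t).exp
      refine (Real.hasDerivAt_sin θ).mul ?_
      exact this.congr_deriv (by simp only [Pi.neg_apply]; ring))
    (fun θ _ => by
      have := (((hasDerivAt_id θ).const_mul (n : ℝ)).cos).neg
      exact this.congr_deriv (by simp [mul_comm]))
    (by apply Continuous.intervalIntegrable; fun_prop)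
    (by apply Continuous.intervalIntegrable; fun_prop)
  have e : n * besselWeight c r n t = 2 / Real.pi * ∫ θ in (0:ℝ)..Real.pi,
      (Real.cos θ * Real.exp (-(c + 2 * r * Real.cos θ) * t) + Real.sin θ
        * (Real.exp (-(c + 2 * r * Real.cos θ) * t) * (2 * r * Real.sin θ * t)))
      * Real.cos (n * θ) := by
    simp only [besselWeight, mul_neg, intervalIntegral.integral_neg, Real.sin_pi, Real.sin_zero,
      zero_mul, sub_neg_eq_add, neg_zero, zero_add, sub_zero] at parts ⊢
    rw [← parts, mul_left_comm, ← intervalIntegral.integral_const_mul]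
    congr 2
    ext θ
    ring
  rw [← abs_of_nonneg (n.cast_nonneg : (0:ℝ) ≤ n), ← abs_mul, e,
    abs_mul, abs_of_pos (by positivity : 0 < 2 / Real.pi)]
  refine mul_le_mul_of_nonneg_left ?_ (by positivity)
  rw [← Real.norm_eq_abs]
  refine intervalIntegral.norm_integral_le_of_norm_le_const fun θ hθ => ?_
  have h := hC (t, θ) ⟨abs_le.1 ht, Set.uIoc_subset_uIcc hθ⟩
  rw [norm_mul]
  exact (mul_le_of_le_one_right (norm_nonneg _) (Real.abs_cos_le_one _)).trans h

/-- The convolution `φₙ * φₘ`. -/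
noncomputable def conv (n m : ℕ) (T : ℝ) : ℝ :=
  ∫ u in (0:ℝ)..T, besselWeight c r n (T - u) * besselWeight c r m u

theorem conv_wave (n m : ℕ) (T : ℝ) :
    r * (conv c r n (m + 1) T + conv c r (n + 2) (m + 1) T
      - conv c r (n + 1) m T - conv c r (n + 1) (m + 2) T)
      = besselWeight c r (n + 1) 0 * besselWeight c r (m + 1) T
        - besselWeight c r (n + 1) T * besselWeight c r (m + 1) 0 := by
  have cont := continuous c r
  have ii : ∀ n m, IntervalIntegrable
      (fun u => besselWeight c r n (T - u) * besselWeight c r m u) MeasureTheory.volume 0 T := fun n m => by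
    have := cont n
    have := cont m
    apply Continuous.intervalIntegrable; fun_prop
  have ftc := intervalIntegral.integral_eq_sub_of_hasDerivAt (a := 0) (b := T)
    (f := fun u => besselWeight c r (n + 1) (T - u) * besselWeight c r (m + 1) u)
    (f' := fun u => r * (besselWeight c r n (T - u) * besselWeight c r (m + 1) u
      + besselWeight c r (n + 2) (T - u) * besselWeight c r (m + 1) u
      - besselWeight c r (n + 1) (T - u) * besselWeight c r m u
      - besselWeight c r (n + 1) (T - u) * besselWeight c r (m + 2) u))
    (fun u _ => by
      refine (((hasDerivAt c r n (T - u)).comp u ((hasDerivAt_id u).const_sub T)).mul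
        (hasDerivAt c r m u)).congr_deriv ?_
      simp only [Function.comp_apply]
      ring)
    (((((ii _ _).add (ii _ _)).sub (ii _ _)).sub (ii _ _)).const_mul _)
  rw [intervalIntegral.integral_const_mul, intervalIntegral.integral_sub
    (((ii _ _).add (ii _ _)).sub (ii _ _)) (ii _ _), intervalIntegral.integral_sub
    ((ii _ _).add (ii _ _)) (ii _ _), intervalIntegral.integral_add (ii _ _) (ii _ _)] at ftc
  simpa [conv] using ftc

open Filter Topology in
theorem tendsto_conv (j : ℕ) (T : ℝ) :
    Tendsto (fun k => conv c r (k + 1) (k + 1 + j) T) atTop (𝓝 0) := by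
  obtain ⟨B, hB⟩ := exists_mul_abs_le c r |T|
  have hB0 : 0 ≤ B := by simpa using hB 0 T le_rfl
  refine squeeze_zero_norm (a := fun k : ℕ => B * B * |T - 0| * (1 / ((k : ℝ) + 1)))
    (fun k => ?_) (by simpa using tendsto_one_div_add_atTop_nhds_zero_nat.const_mul (B * B * |T|))
  have hk : (0:ℝ) < k + 1 := by positivity
  have h := intervalIntegral.norm_integral_le_of_norm_le_const (a := 0) (b := T)
    (f := fun u => besselWeight c r (k + 1) (T - u) * besselWeight c r (k + 1 + j) u)
    (C := B / (k + 1) * B) (fun u hu => by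
      have hu' := Set.uIoc_subset_uIcc hu
      have hu1 : |u| ≤ |T| := by simpa using Set.abs_sub_left_of_mem_uIcc hu'
      have hu2 : |T - u| ≤ |T| := by simpa using Set.abs_sub_right_of_mem_uIcc hu'
      have h1 := hB (k + 1) _ hu2
      have h2 := hB (k + 1 + j) _ hu1
      push_cast at h1 h2
      rw [norm_mul, Real.norm_eq_abs, Real.norm_eq_abs]
      refine mul_le_mul ?_ ?_ (abs_nonneg _) (by positivity)
      · rw [le_div_iff₀ hk]; linarith
      · refine le_trans ?_ h2
        refine le_mul_of_one_le_left (abs_nonneg _) ?_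
        have : (0:ℝ) ≤ j := by positivity
        have : (0:ℝ) ≤ k := by positivity
        linarith)
  refine h.trans (le_of_eq ?_)
  field_simp

/-- The quadratic relation `r φ₁ * φ₁ = -φ₂`, the time-domain form of the semicircle law's
self-consistent equation. -/
theorem mul_conv_one_one (T : ℝ) : r * conv c r 1 1 T = -besselWeight c r 2 T := by
  have z : ∀ n, conv c r n 0 T = 0 ∧ conv c r 0 n T = 0 := fun n => by
    simp [conv, apply_index_zero]
  have base : ∀ k, r * (conv c r (k + 2) (k + 2) T - conv c r (k + 1) (k + 3) T)
      = r * conv c r 1 1 T + besselWeight c r 2 T := fun k => by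
    induction k with
    | zero =>
      have := conv_wave c r 0 1 T
      simp only [zero_add, Nat.reduceAdd, (z _).2, one_apply_zero, add_two_apply_zero c r 0] at this ⊢
      linarith
    | succ k ih =>
      have := conv_wave c r (k + 1) (k + 2) T
      rw [add_two_apply_zero c r k, add_two_apply_zero c r (k + 1)] at this
      simp only [add_assoc, Nat.reduceAdd] at this ⊢ ih
      linarith
  have lim := ((((tendsto_conv c r 0 T).comp (Filter.tendsto_add_atTop_nat 1)).sub
    (tendsto_conv c r 2 T)).const_mul r)
  have := tendsto_nhds_unique (lim.congr fun k => base k) tendsto_const_nhds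
  linarith

end besselWeight

/-- The squared modulus `|1 + r e^{iθ}|²`. -/
noncomputable def mpParam (r θ : ℝ) : ℝ := 1 + r ^ 2 + 2 * r * Real.cos θ

namespace mpParam

variable {r : ℝ}

theorem eq_add_sq (r θ : ℝ) : mpParam r θ = (r + Real.cos θ) ^ 2 + Real.sin θ ^ 2 := by
  rw [mpParam, Real.sin_sq]; ring

theorem nonneg (r θ : ℝ) : 0 ≤ mpParam r θ := by rw [eq_add_sq]; positivity

theorem continuous (r : ℝ) : Continuous (mpParam r) := by unfold mpParam; fun_prop

theorem one_sub_sq_le (hr : 0 ≤ r) (θ : ℝ) : (1 - r) ^ 2 ≤ mpParam r θ := by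
  unfold mpParam
  nlinarith [Real.neg_one_le_cos θ]

/-- Fourier sine coefficients of `sin θ / |1 + r e^{iθ}|²`. -/
noncomputable def sineCoeff (r : ℝ) (n : ℕ) : ℝ :=
  ∫ θ in (0:ℝ)..Real.pi, Real.sin θ * Real.sin (n * θ) / mpParam r θ

theorem pos_of_lt_one (h0 : 0 < r) (h1 : r < 1) (θ : ℝ) : 0 < mpParam r θ :=
  lt_of_lt_of_le (by have : 0 < 1 - r := by linarith
                     positivity) (one_sub_sq_le h0.le θ)

theorem intervalIntegrable_sineCoeff (h0 : 0 < r) (h1 : r < 1) (n : ℕ) : IntervalIntegrable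
    (fun θ => Real.sin θ * Real.sin (n * θ) / mpParam r θ) volume 0 Real.pi := by
  have := continuous r
  apply Continuous.intervalIntegrable
  exact Continuous.div (by fun_prop) this fun θ => (pos_of_lt_one h0 h1 θ).ne'

theorem sineCoeff_recurrence (h0 : 0 < r) (h1 : r < 1) (n : ℕ) :
    r * (sineCoeff r n + sineCoeff r (n + 2)) + (1 + r ^ 2) * sineCoeff r (n + 1)
      = ∫ θ in (0:ℝ)..Real.pi, Real.sin θ * Real.sin ((n + 1 : ℕ) * θ) := by
  have ii := intervalIntegrable_sineCoeff h0 h1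
  unfold sineCoeff
  rw [← intervalIntegral.integral_add (ii _) (ii _), ← intervalIntegral.integral_const_mul,
    ← intervalIntegral.integral_const_mul, ← intervalIntegral.integral_add
      (((ii _).add (ii _)).const_mul _) ((ii _).const_mul _)]
  congr 1
  ext θ
  have := (pos_of_lt_one h0 h1 θ).ne'
  have e := besselWeight.sin_add_sin_add_two n θ
  generalize Real.sin ((n + 1 : ℕ) * θ) = x at *
  generalize Real.sin ((n + 2 : ℕ) * θ) = y at *
  field_simp
  rw [mpParam]
  linear_combination r * Real.sin θ * e

theorem abs_sineCoeff_le (h0 : 0 < r) (h1 : r < 1) (n : ℕ) : |sineCoeff r n| ≤ 1 / (1 - r) ^ 2 * |Real.pi - 0| := by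
  rw [sineCoeff, ← Real.norm_eq_abs]
  refine intervalIntegral.norm_integral_le_of_norm_le_const fun θ _ => ?_
  rw [norm_div, norm_mul, Real.norm_of_nonneg (nonneg r θ)]
  have : 0 < 1 - r := by linarith
  exact div_le_div₀ zero_le_one (mul_le_one₀ (Real.abs_sin_le_one _) (norm_nonneg _)
    (Real.abs_sin_le_one _)) (by positivity) (one_sub_sq_le h0.le θ)

open Filter Topology in
theorem sineCoeff_one_of_lt_one (h0 : 0 < r) (h1 : r < 1) : sineCoeff r 1 = Real.pi / 2 := by
  have step : ∀ n, sineCoeff r 2 + r * sineCoeff r 1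
      = (-r) ^ n * (sineCoeff r (n + 2) + r * sineCoeff r (n + 1)) := fun n => by
    induction n with
    | zero => simp
    | succ n ih =>
      have := sineCoeff_recurrence h0 h1 (n + 1)
      rw [integral_sin_mul_sin_add_two n] at this
      rw [ih]
      simp only [add_assoc, Nat.reduceAdd] at this ⊢
      linear_combination (-r) ^ n * this
  have bd : ∀ n, |sineCoeff r (n + 2) + r * sineCoeff r (n + 1)|
      ≤ (1 + r) * (1 / (1 - r) ^ 2 * |Real.pi - 0|) := fun n => by
    refine (abs_add_le _ _).trans ?_
    rw [abs_mul, abs_of_pos h0, one_add_mul]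
    exact add_le_add (abs_sineCoeff_le h0 h1 _)
      (mul_le_mul_of_nonneg_left (abs_sineCoeff_le h0 h1 _) h0.le)
  have lim : Tendsto (fun n : ℕ => r ^ n * ((1 + r) * (1 / (1 - r) ^ 2 * |Real.pi - 0|)))
      atTop (𝓝 0) := by
    have := (tendsto_pow_atTop_nhds_zero_of_lt_one h0.le h1).mul_const
      ((1 + r) * (1 / (1 - r) ^ 2 * |Real.pi - 0|))
    rwa [zero_mul] at this
  have zero : sineCoeff r 2 + r * sineCoeff r 1 = 0 := by
    refine abs_nonpos_iff.1 (ge_of_tendsto' lim fun n => ?_)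
    rw [step n, abs_mul, abs_pow, abs_neg, abs_of_pos h0]
    exact mul_le_mul_of_nonneg_left (bd n) (by positivity)
  have rec0 := sineCoeff_recurrence h0 h1 0
  rw [zero_add, integral_sin_mul_sin_one] at rec0
  have : sineCoeff r 0 = 0 := by simp [sineCoeff]
  rw [this] at rec0
  linear_combination rec0 - r * zero

theorem integral_sin_sq_div_of_lt_one (h0 : 0 < r) (h1 : r < 1) :
    ∫ θ in (0:ℝ)..Real.pi, Real.sin θ ^ 2 / mpParam r θ = Real.pi / 2 := by
  rw [← sineCoeff_one_of_lt_one h0 h1, sineCoeff]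
  simp [sq]

theorem integral_sin_sq_div_one :
    ∫ θ in (0:ℝ)..Real.pi, Real.sin θ ^ 2 / mpParam 1 θ = Real.pi / 2 := by
  have : ∀ θ ∈ Set.Ioo 0 Real.pi, Real.sin θ ^ 2 / mpParam 1 θ = (1 - Real.cos θ) / 2 := by
    intro θ hθ
    have hs := Real.sin_pos_of_mem_Ioo hθ
    have hp : mpParam 1 θ ≠ 0 := by rw [eq_add_sq]; positivity
    rw [div_eq_div_iff hp two_ne_zero, Real.sin_sq, mpParam]
    ring
  rw [intervalIntegral.integral_of_le Real.pi_pos.le, integral_Ioc_eq_integral_Ioo,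
    setIntegral_congr_fun measurableSet_Ioo this, ← integral_Ioc_eq_integral_Ioo,
    ← intervalIntegral.integral_of_le Real.pi_pos.le]
  simp [intervalIntegral.integral_div, intervalIntegral.integral_sub]

theorem inv_scale (h0 : 0 < r) (θ : ℝ) : mpParam r θ = r ^ 2 * mpParam r⁻¹ θ := by
  unfold mpParam
  field_simp
  ring

theorem integral_sin_sq_div (h0 : 0 < r) :
    ∫ θ in (0:ℝ)..Real.pi, Real.sin θ ^ 2 / mpParam r θ
      = Real.pi / 2 * min 1 (1 / r ^ 2) := by
  rcases lt_trichotomy r 1 with h | rfl | h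
  · rw [integral_sin_sq_div_of_lt_one h0 h, min_eq_left, mul_one]
    rw [le_div_iff₀ (by positivity)]
    nlinarith
  · rw [integral_sin_sq_div_one]; simp
  · have : ∀ θ, Real.sin θ ^ 2 / mpParam r θ
        = 1 / r ^ 2 * (Real.sin θ ^ 2 / mpParam r⁻¹ θ) := fun θ => by
      rw [inv_scale h0, div_mul_div_comm, one_mul]
    simp only [this]
    rw [intervalIntegral.integral_const_mul,
      integral_sin_sq_div_of_lt_one (inv_pos.2 h0) (inv_lt_one_of_one_lt₀ h), min_eq_right,
      mul_comm]
    rw [div_le_one (by positivity)]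
    nlinarith

end mpParam

/-- The absolutely continuous part of the Marchenko–Pastur law. -/
noncomputable def mpBulk (δ : ℝ) : Measure ℝ :=
  volume.withDensity
    (fun x => ENNReal.ofReal ((Set.Icc (lamMinus δ) (lamPlus δ)).indicator (mpDensity δ) x))

theorem mpMeasure_eq (δ : ℝ) :
    mpMeasure δ = mpBulk δ + ENNReal.ofReal (1 - δ) • Measure.dirac 0 := rfl

theorem measurable_mpDensity_indicator (δ : ℝ) : Measurable
    (fun x => ENNReal.ofReal ((Set.Icc (lamMinus δ) (lamPlus δ)).indicator (mpDensity δ) x)) := by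
  refine ENNReal.measurable_ofReal.comp (Measurable.indicator ?_ measurableSet_Icc)
  unfold mpDensity
  fun_prop

theorem lamMinus_nonneg (δ : ℝ) : 0 ≤ lamMinus δ := sq_nonneg _

theorem mpDensity_nonneg {δ x : ℝ} (hδ : 0 < δ) (hx : 0 ≤ x) : 0 ≤ mpDensity δ x := by
  unfold mpDensity
  positivity

theorem ae_mem_Icc_mpMeasure (δ : ℝ) : ∀ᵐ x ∂(mpMeasure δ), x ∈ Set.Icc 0 (lamPlus δ) := by
  rw [mpMeasure_eq, ae_add_measure_iff]
  constructor
  · rw [mpBulk, ae_withDensity_iff (measurable_mpDensity_indicator δ)]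
    refine Filter.Eventually.of_forall fun x hx => ?_
    by_contra hn
    refine hx ?_
    rw [Set.indicator_of_notMem (fun hx => hn ⟨(lamMinus_nonneg δ).trans hx.1, hx.2⟩),
      ENNReal.ofReal_zero]
  · refine Measure.ae_smul_measure ?_ _
    refine (ae_dirac_iff (p := (· ∈ Set.Icc 0 (lamPlus δ))) measurableSet_Icc).2 ?_
    exact ⟨le_rfl, sq_nonneg _⟩

theorem image_mpParam {δ : ℝ} (hδ : 0 < δ) : mpParam (1 / √δ) '' Set.Icc 0 Real.pi
    = Set.Icc (lamMinus δ) (lamPlus δ) := by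
  have hr : 0 < 1 / √δ := by positivity
  have : mpParam (1 / √δ) = (fun y => 2 * (1 / √δ) * y + (1 + (1 / √δ) ^ 2)) ∘ Real.cos := by
    ext θ
    simp only [mpParam, Function.comp_apply]
    ring
  rw [this, Set.image_comp, Real.bijOn_cos.image_eq, Set.image_affine_Icc' (by positivity)]
  congr 1 <;> simp only [lamMinus, lamPlus] <;> ring

theorem mpDensity_mpParam {δ : ℝ} (hδ : 0 < δ) {θ : ℝ} (hθ : θ ∈ Set.Icc 0 Real.pi) :
    |2 * (1 / √δ) * -Real.sin θ| * mpDensity δ (mpParam (1 / √δ) θ)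
      = 2 / Real.pi * (Real.sin θ ^ 2 / mpParam (1 / √δ) θ) := by
  have hr : 0 < 1 / √δ := by positivity
  have hs := Real.sin_nonneg_of_mem_Icc hθ
  have hδr : δ * (1 / √δ) ^ 2 = 1 := by
    rw [div_pow, Real.sq_sqrt hδ.le]; field_simp
  have hsq : (lamPlus δ - mpParam (1 / √δ) θ) * (mpParam (1 / √δ) θ - lamMinus δ)
      = (2 * (1 / √δ) * Real.sin θ) ^ 2 := by
    rw [mul_pow, Real.sin_sq]
    simp only [lamPlus, lamMinus, mpParam]
    ring
  rw [mpDensity, hsq, Real.sqrt_sq (by positivity), mul_neg, abs_neg,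
    abs_of_nonneg (by positivity)]
  generalize 1 / √δ = r at *
  calc _ = (δ * r ^ 2) * (4 * Real.sin θ ^ 2 / (2 * Real.pi * mpParam r θ)) := by ring
    _ = _ := by rw [hδr]; ring

theorem integral_mpBulk {δ : ℝ} (hδ : 0 < δ) (g : ℝ → ℝ) :
    ∫ x, g x ∂(mpBulk δ) = ∫ θ in (0:ℝ)..Real.pi,
      2 / Real.pi * (Real.sin θ ^ 2 / mpParam (1 / √δ) θ) * g (mpParam (1 / √δ) θ) := by
  have hr : 0 < 1 / √δ := by positivity
  rw [mpBulk, integral_withDensity_eq_integral_toReal_smul (measurable_mpDensity_indicator δ)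
    (Filter.Eventually.of_forall fun _ => ENNReal.ofReal_lt_top)]
  have e : ∀ x, (ENNReal.ofReal ((Set.Icc (lamMinus δ) (lamPlus δ)).indicator
      (mpDensity δ) x)).toReal • g x
      = (Set.Icc (lamMinus δ) (lamPlus δ)).indicator (fun x => mpDensity δ x * g x) x := by
    intro x
    by_cases hx : x ∈ Set.Icc (lamMinus δ) (lamPlus δ)
    · rw [Set.indicator_of_mem hx, Set.indicator_of_mem hx, ENNReal.toReal_ofReal
        (mpDensity_nonneg hδ ((lamMinus_nonneg δ).trans hx.1)), smul_eq_mul]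
    · simp [Set.indicator_of_notMem hx]
  simp only [e]
  rw [integral_indicator measurableSet_Icc, ← image_mpParam hδ,
    integral_image_eq_integral_abs_deriv_smul measurableSet_Icc (f := mpParam (1 / √δ))
      (f' := fun θ => 2 * (1 / √δ) * -Real.sin θ)
      (fun θ _ => (((Real.hasDerivAt_cos θ).const_mul _).const_add _).hasDerivWithinAt)
      (fun x hx y hy hxy => Real.injOn_cos hx hy (by
        simpa [mpParam, hr.ne', hδ.ne', (Real.sqrt_pos.2 hδ).ne'] using hxy)),
    intervalIntegral.integral_of_le Real.pi_pos.le, ← integral_Icc_eq_integral_Ioc]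
  refine setIntegral_congr_fun measurableSet_Icc fun θ hθ => ?_
  simp only [smul_eq_mul]
  rw [← mul_assoc, mpDensity_mpParam hδ hθ]

theorem measureReal_mpBulk {δ : ℝ} (hδ : 0 < δ) : (mpBulk δ).real Set.univ = min 1 δ := by
  have h := integral_mpBulk hδ fun _ => 1
  simp only [mul_one, integral_const, smul_eq_mul] at h
  rw [h, intervalIntegral.integral_const_mul, mpParam.integral_sin_sq_div (by positivity), div_pow,
    Real.sq_sqrt hδ.le]
  field_simp

theorem isFiniteMeasure_mpBulk {δ : ℝ} (hδ : 0 < δ) : IsFiniteMeasure (mpBulk δ) := by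
  refine ⟨lt_top_iff_ne_top.2 fun h => ?_⟩
  have h1 := measureReal_mpBulk hδ
  have h2 : 0 < min 1 δ := lt_min one_pos hδ
  rw [Measure.real, h, ENNReal.toReal_top] at h1
  exact h2.ne h1

theorem isFiniteMeasure_mpMeasure {δ : ℝ} (hδ : 0 < δ) : IsFiniteMeasure (mpMeasure δ) := by
  have := isFiniteMeasure_mpBulk hδ
  rw [mpMeasure_eq]
  have : IsFiniteMeasure (ENNReal.ofReal (1 - δ) • Measure.dirac (0:ℝ)) :=
    Measure.smul_finite _ ENNReal.ofReal_ne_top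
  infer_instance

theorem isProbabilityMeasure_mpMeasure {δ : ℝ} (hδ : 0 < δ) : IsProbabilityMeasure (mpMeasure δ) := by
  have := isFiniteMeasure_mpBulk hδ
  constructor
  have h : mpBulk δ Set.univ = ENNReal.ofReal (min 1 δ) := by
    rw [← measureReal_mpBulk hδ, ofReal_measureReal]
  rw [mpMeasure_eq, Measure.add_apply, h, Measure.smul_apply, measure_univ, smul_eq_mul, mul_one]
  rcases le_total δ 1 with h | h
  · rw [min_eq_right h, ← ENNReal.ofReal_add hδ.le (by linarith)]
    simp
  · rw [min_eq_left h, ENNReal.ofReal_of_nonpos (p := 1 - δ) (by linarith)]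
    simp

theorem integrable_mpMeasure {δ : ℝ} (hδ : 0 < δ) {g : ℝ → ℝ} (hg : Continuous g) : Integrable g (mpMeasure δ) := by
  have := isFiniteMeasure_mpMeasure hδ
  obtain ⟨C, hC⟩ := (isCompact_Icc (a := (0:ℝ)) (b := lamPlus δ)).exists_bound_of_continuousOn
    hg.continuousOn
  exact .of_bound hg.aestronglyMeasurable C ((ae_mem_Icc_mpMeasure δ).mono hC)

theorem K1_eq_besselWeight {δ : ℝ} (hδ : 0 < δ) (lam t : ℝ) :
    K1 δ lam t = besselWeight (1 + (1 / √δ) ^ 2 + lam) (1 / √δ) 1 t := by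
  have hi := integrable_mpMeasure hδ (g := fun x => x * Real.exp (-(x + lam) * t)) (by fun_prop)
  rw [mpMeasure_eq] at hi
  rw [K1, mpMeasure_eq, integral_add_measure (hi.mono_measure (Measure.le_add_right le_rfl))
    (hi.mono_measure (Measure.le_add_left le_rfl)), integral_smul_measure, integral_dirac,
    integral_mpBulk hδ, besselWeight, ← intervalIntegral.integral_const_mul]
  simp only [zero_mul, smul_zero, add_zero]
  congr 1
  ext θ
  have e : Real.sin θ ^ 2 / mpParam (1 / √δ) θ * mpParam (1 / √δ) θ = Real.sin θ ^ 2 := by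
    refine div_mul_cancel_of_imp fun h => ?_
    rw [mpParam.eq_add_sq] at h
    nlinarith [sq_nonneg (1 / √δ + Real.cos θ), sq_nonneg (Real.sin θ)]
  rw [mul_assoc, ← mul_assoc (Real.sin θ ^ 2 / _), e, mpParam, Nat.cast_one, one_mul, ← sq]
  ring_nf

theorem K0_zero {δ : ℝ} (hδ : 0 < δ) (lam : ℝ) : K0 δ lam 0 = 1 := by
  have := isProbabilityMeasure_mpMeasure hδ
  simp [K0]

theorem hasDerivAt_K0 {δ : ℝ} (hδ : 0 < δ) (lam t : ℝ) :
    HasDerivAt (K0 δ lam) (-lam * K0 δ lam t - K1 δ lam t) t := by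
  have set_univ : ProbabilityTheory.integrableExpSet id (mpMeasure δ) = Set.univ :=
    Set.eq_univ_of_forall fun s => integrable_mpMeasure hδ (by simp only [id]; fun_prop)
  have hm := ProbabilityTheory.hasDerivAt_mgf (X := id) (μ := mpMeasure δ) (t := -t)
    (by simp [set_univ])
  have hK : K0 δ lam = fun t => Real.exp (-lam * t) *
      ProbabilityTheory.mgf id (mpMeasure δ) (-t) := by
    ext t
    rw [K0, ProbabilityTheory.mgf, ← integral_const_mul]
    congr 1
    ext x
    rw [← Real.exp_add, id]
    ring_nf
  have hK1 : K1 δ lam t = Real.exp (-lam * t) * ∫ x, id x * Real.exp (-t * id x) ∂(mpMeasure δ) := by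
    rw [K1, ← integral_const_mul]
    congr 1
    ext x
    rw [mul_left_comm, ← Real.exp_add, id]
    ring_nf
  rw [hK1, hK]
  refine ((((hasDerivAt_id t).const_mul (-lam)).exp).mul
    (hm.comp t (hasDerivAt_neg t))).congr_deriv ?_
  simp only [id, Function.comp_apply]
  ring

theorem hasDerivAt_K1 {δ : ℝ} (hδ : 0 < δ) (lam t : ℝ) :
    HasDerivAt (K1 δ lam) (-(1 + 1 / δ + lam) * K1 δ lam t
      + 1 / δ * ∫ u in (0:ℝ)..t, K1 δ lam (t - u) * K1 δ lam u) t := by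
  have hK : K1 δ lam = besselWeight (1 + (1 / √δ) ^ 2 + lam) (1 / √δ) 1 :=
    funext (K1_eq_besselWeight hδ lam)
  have hr : (1 / √δ) ^ 2 = 1 / δ := by rw [div_pow, Real.sq_sqrt hδ.le, one_pow]
  rw [hK]
  refine (besselWeight.hasDerivAt _ _ 0 t).congr_deriv ?_
  have h := besselWeight.mul_conv_one_one (1 + (1 / √δ) ^ 2 + lam) (1 / √δ) t
  rw [besselWeight.conv] at h
  rw [besselWeight.apply_index_zero, ← hr, zero_add, zero_add]
  linear_combination (-(1 / √δ)) * h

theorem K1_zero {δ : ℝ} (hδ : 0 < δ) (lam : ℝ) : K1 δ lam 0 = 1 := by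
  rw [K1_eq_besselWeight hδ, besselWeight.one_apply_zero]

theorem continuous_K0 {δ : ℝ} (hδ : 0 < δ) (lam : ℝ) : Continuous (K0 δ lam) :=
  continuous_iff_continuousAt.2 fun t => (hasDerivAt_K0 hδ lam t).continuousAt

theorem continuous_K1 {δ : ℝ} (hδ : 0 < δ) (lam : ℝ) : Continuous (K1 δ lam) :=
  continuous_iff_continuousAt.2 fun t => (hasDerivAt_K1 hδ lam t).continuousAt

/-- The convolution equation `K₁ = K₀ - (1/δ) K₀ * K₁`. -/
theorem K1_eq_sub_conv {δ : ℝ} (hδ : 0 < δ) (lam t : ℝ) :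
    K1 δ lam t = K0 δ lam t - 1 / δ * ∫ u in (0:ℝ)..t, K0 δ lam (t - u) * K1 δ lam u := by
  have c0 := continuous_K0 hδ lam
  have c1 := continuous_K1 hδ lam
  have c1' : Continuous fun t => -(1 + 1 / δ + lam) * K1 δ lam t
      + 1 / δ * ∫ u in (0:ℝ)..t, K1 δ lam (t - u) * K1 δ lam u := by
    have hr : (1 / √δ) ^ 2 = 1 / δ := by rw [div_pow, Real.sq_sqrt hδ.le, one_pow]
    have cb := besselWeight.continuous (1 + (1 / √δ) ^ 2 + lam) (1 / √δ) 2
    have e : ∀ t, 1 / δ * ∫ u in (0:ℝ)..t, K1 δ lam (t - u) * K1 δ lam u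
        = -(1 / √δ) * besselWeight (1 + (1 / √δ) ^ 2 + lam) (1 / √δ) 2 t := fun t => by
      simp only [K1_eq_besselWeight hδ]
      rw [← hr, sq, mul_assoc, ← besselWeight.conv, besselWeight.mul_conv_one_one]
      ring
    simp only [e]
    fun_prop
  have hC := hasDerivAt_convolution_interval (hasDerivAt_K0 hδ lam) (hasDerivAt_K1 hδ lam)
    (by fun_prop) c1'
  set C : ℝ → ℝ := fun t => ∫ u in (0:ℝ)..t, K0 δ lam (t - u) * K1 δ lam u with hCdef
  have key : ∀ t, HasDerivAt (fun t => Real.exp (lam * t) *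
      (K1 δ lam t - K0 δ lam t + 1 / δ * C t)) 0 t := fun t => by
    refine ((((hasDerivAt_id t).const_mul lam).exp).mul (((hasDerivAt_K1 hδ lam t).sub
      (hasDerivAt_K0 hδ lam t)).add ((hC t).const_mul (1 / δ)))).congr_deriv ?_
    have split : ∫ u in (0:ℝ)..t, (-lam * K0 δ lam (t - u) - K1 δ lam (t - u)) * K1 δ lam u
        = -lam * C t - ∫ u in (0:ℝ)..t, K1 δ lam (t - u) * K1 δ lam u := by
      rw [hCdef, ← intervalIntegral.integral_const_mul, ← intervalIntegral.integral_sub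
        (by apply Continuous.intervalIntegrable; fun_prop)
        (by apply Continuous.intervalIntegrable; fun_prop)]
      congr 1
      ext u
      ring
    rw [split, K0_zero hδ]
    simp only [Pi.add_apply, Pi.sub_apply, id]
    ring
  have const := is_const_of_deriv_eq_zero (fun t => (key t).differentiableAt)
    (fun t => (key t).deriv) t 0
  have hC0 : C 0 = 0 := by simp [hCdef]
  simp only [hC0, K0_zero hδ, K1_zero hδ, mul_zero, sub_self, add_zero, mul_eq_zero,
    Real.exp_ne_zero, false_or] at const
  linarith

/-- The pair `(R_θ, R_ℓ) = (K₀, −(1/δ) K₁)` solves the coupled Volterra integral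
equations for the DMFT response functions of ridge regression:
`R_θ(t) = 1 − ∫₀ᵗ ((1+λ) R_θ(s) + ∫₀ˢ R_ℓ(s−u) R_θ(u) du) ds` and
`R_ℓ(t) = −(1/δ) R_θ(t) − (1/δ) ∫₀ᵗ R_θ(t−s) R_ℓ(s) ds`. -/
theorem mp_solves_dmft_volterra (δ lam : ℝ) (hδ : 0 < δ) (hlam : 0 ≤ lam) :
    ∀ t : ℝ, 0 ≤ t →
      (K0 δ lam t
          = 1 - ∫ s in (0:ℝ)..t, ((1 + lam) * K0 δ lam s
              + ∫ u in (0:ℝ)..s, (-(1 / δ) * K1 δ lam (s - u)) * K0 δ lam u)) ∧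
      (-(1 / δ) * K1 δ lam t
          = -(1 / δ) * K0 δ lam t
            - (1 / δ) * ∫ s in (0:ℝ)..t, K0 δ lam (t - s) * (-(1 / δ) * K1 δ lam s)) := by
  intro t _
  have c0 := continuous_K0 hδ lam
  have c1 := continuous_K1 hδ lam
  have hconv := K1_eq_sub_conv hδ lam
  refine ⟨?_, ?_⟩
  · have comm : ∀ s, ∫ u in (0:ℝ)..s, (-(1 / δ) * K1 δ lam (s - u)) * K0 δ lam u
        = K1 δ lam s - K0 δ lam s := fun s => by
      have flip := intervalIntegral.integral_comp_sub_left (a := 0) (b := s)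
        (fun u => K0 δ lam (s - u) * K1 δ lam u) s
      simp only [sub_sub_cancel, sub_self, sub_zero] at flip
      rw [hconv s, ← flip, sub_sub_cancel_left, ← neg_mul, ← intervalIntegral.integral_const_mul]
      congr 1
      ext u
      ring
    have ftc := intervalIntegral.integral_eq_sub_of_hasDerivAt (a := 0) (b := t)
      (fun s _ => hasDerivAt_K0 hδ lam s) (by apply Continuous.intervalIntegrable; fun_prop)
    have e : ∀ s, (1 + lam) * K0 δ lam s + (K1 δ lam s - K0 δ lam s)
        = -(-lam * K0 δ lam s - K1 δ lam s) := fun s => by ring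
    simp only [comm, e]
    rw [intervalIntegral.integral_neg, ftc, K0_zero hδ]
    ring
  · simp only [mul_left_comm (K0 δ lam _)]
    rw [intervalIntegral.integral_const_mul]
    linear_combination (-(1 / δ)) * hconv t
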